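/- Let λ ≥ 2 and let E_1, E_2, E_3 ≥ 0 be the energies of the first three nodes of a line v_1 → v_2 → v_3 → ... with E_1 < λ·E_2 and E_2 ≥ λ·E_3. After the λ-exchange update on the pair (v_1, v_2), i.e., E_1' = (λ/(λ+1))(E_1+E_2) and E_2' = (1/(λ+1))(E_1+E_2) with E_3' = E_3, the change in potential satisfies (λ·E_2' − E_1')·1[E_1' < λE_2'] + (λ·E_3' − E_2')·1[E_2' < λE_3'] − (λ·E_2 − E_1) ≤ (λ/(λ+1))·(E_1 − λ·E_2) < 0. -/

import Mathlib

/-!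
Write `δ = (λ E₂ - E₁) / (λ + 1)`, so that the root pair contributes `(λ + 1) δ` to the potential.
The exchange moves exactly the energy `δ` from `v₂` to `v₁`, and brings the pair to `E₁' = λ E₂'`,
where it contributes nothing. Lowering `E₂` by `δ` costs at most `δ` on the pair `(v₂, v₃)`.
The potential therefore changes by at most `δ - (λ + 1) δ = -λ δ`.
-/

/-- The `λ`-exchange: the energies of a pair `(v_i, v_{i+1})` after an interaction that splits
their total `x + y` in the ratio `λ : 1`. -/
def exchange {K : Type*} [Field K] (lam x y : K) : K × K :=
  (lam / (lam + 1) * (x + y), 1 / (lam + 1) * (x + y))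

/-- The contribution `(λ E_{i+1} - E_i) · 1[E_i < λ E_{i+1}]` to the potential `Φ` of a pair
`(v_i, v_{i+1})` with energies `E_i = x` and `E_{i+1} = y`. -/
def deficit {R : Type*} [Ring R] [LinearOrder R] (lam x y : R) : R :=
  if x < lam * y then lam * y - x else 0

section Exchange

variable {K : Type*} [Field K]

theorem exchange_fst_eq_mul_snd (lam x y : K) :
    (exchange lam x y).1 = lam * (exchange lam x y).2 := by
  simp only [exchange]
  ring

theorem exchange_snd_eq_sub {lam : K} (hlam : lam + 1 ≠ 0) (x y : K) :
    (exchange lam x y).2 = y - (lam * y - x) / (lam + 1) := by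
  simp only [exchange]
  field_simp
  ring

end Exchange

section Deficit

variable {R : Type*} [Ring R] [LinearOrder R]

theorem deficit_of_lt {lam x y : R} (h : x < lam * y) : deficit lam x y = lam * y - x :=
  if_pos h

theorem deficit_of_le {lam x y : R} (h : lam * y ≤ x) : deficit lam x y = 0 :=
  if_neg h.not_gt

variable [IsOrderedAddMonoid R]

theorem deficit_eq_max (lam x y : R) :
    deficit lam x y = max (lam * y - x) 0 := by
  rcases lt_or_ge x (lam * y) with h | h
  · rw [deficit_of_lt h, max_eq_left (sub_nonneg.2 h.le)]
  · rw [deficit_of_le h, max_eq_right (sub_nonpos.2 h)]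

theorem deficit_sub_le {δ : R} (hδ : 0 ≤ δ) (lam x y : R) :
    deficit lam (x - δ) y ≤ deficit lam x y + δ := by
  rw [deficit_eq_max, deficit_eq_max, ← sub_add, ← max_add_add_right, zero_add]
  exact max_le_max_left _ hδ

end Deficit

section Potential

variable {K : Type*} [Field K] [LinearOrder K]

theorem deficit_exchange (lam x y : K) :
    deficit lam (exchange lam x y).1 (exchange lam x y).2 = 0 :=
  deficit_of_le (exchange_fst_eq_mul_snd lam x y).ge

variable [IsStrictOrderedRing K] {lam x y : K}

theorem deficit_exchange_snd_le (hlam : 0 < lam + 1) (hxy : x ≤ lam * y) (z : K) :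
    deficit lam (exchange lam x y).2 z ≤ deficit lam y z + (lam * y - x) / (lam + 1) := by
  rw [exchange_snd_eq_sub hlam.ne']
  exact deficit_sub_le (div_nonneg (sub_nonneg.2 hxy) hlam.le) lam y z

theorem stmt12_general (hlam : 0 < lam) (hxy : x < lam * y) (z : K) :
    deficit lam (exchange lam x y).1 (exchange lam x y).2 + deficit lam (exchange lam x y).2 z -
        (deficit lam x y + deficit lam y z) ≤ lam / (lam + 1) * (x - lam * y) ∧
      lam / (lam + 1) * (x - lam * y) < 0 := by
  have hlam' : 0 < lam + 1 := by positivity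
  refine ⟨?_, mul_neg_of_pos_of_neg (div_pos hlam hlam') (sub_neg.2 hxy)⟩
  calc
    _ = deficit lam (exchange lam x y).2 z - (lam * y - x + deficit lam y z) := by
      rw [deficit_exchange, deficit_of_lt hxy, zero_add]
    _ ≤ deficit lam y z + (lam * y - x) / (lam + 1) - (lam * y - x + deficit lam y z) :=
      sub_le_sub_right (deficit_exchange_snd_le hlam' hxy.le z) _
    _ = lam / (lam + 1) * (x - lam * y) := by
      field_simp
      ring

end Potential

theorem stmt12 (lam : ℝ) (hlam : 2 ≤ lam) (E1 E2 E3 : ℝ)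
    (h1 : 0 ≤ E1) (h2 : 0 ≤ E2) (h3 : 0 ≤ E3)
    (hlt : E1 < lam * E2) (heq : lam * E3 ≤ E2) :
    let E1' := lam / (lam + 1) * (E1 + E2)
    let E2' := 1 / (lam + 1) * (E1 + E2)
    let E3' := E3
    (if E1' < lam * E2' then lam * E2' - E1' else 0) +
        (if E2' < lam * E3' then lam * E3' - E2' else 0) - (lam * E2 - E1)
      ≤ lam / (lam + 1) * (E1 - lam * E2) ∧
      lam / (lam + 1) * (E1 - lam * E2) < 0 := by
  have key := stmt12_general (two_pos.trans_le hlam) hlt E3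
  rwa [deficit_of_lt hlt, deficit_of_le heq, add_zero] at key
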